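/- Let α ∈ ℂ. If both α and e^{2π√(-1) α} are algebraic over ℚ, then α is a rational number. -/

import Mathlib

open Finset in
lemma gs_factor (Z : Finset ℂ) : ∀ (F : ℂ → ℂ), Differentiable ℂ F → (∀ z ∈ Z, F z = 0) →
    ∃ G : ℂ → ℂ, Differentiable ℂ G ∧ ∀ z, F z = (∏ a ∈ Z, (z - a)) * G z := by
  classical
  induction Z using Finset.induction_on with
  | empty => intro F hF _; exact ⟨F, hF, by simp⟩
  | insert a Z ha ih =>
    intro F hF hz
    have hd : Differentiable ℂ (dslope F a) := by
      rw [← differentiableOn_univ]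
      exact (Complex.differentiableOn_dslope Filter.univ_mem).2 hF.differentiableOn
    have hFa : F a = 0 := hz a (by simp)
    have key : ∀ z, F z = (z - a) * dslope F a z := by
      intro z
      have := sub_smul_dslope F a z
      rw [hFa, sub_zero, smul_eq_mul] at this
      exact this.symm
    obtain ⟨G, hG, h⟩ := ih (dslope F a) hd (by
      intro z hzZ
      have h1 := key z
      rw [hz z (by simp [hzZ])] at h1
      have h2 : z - a ≠ 0 := sub_ne_zero.2 (by rintro rfl; exact ha hzZ)
      exact (mul_eq_zero.1 h1.symm).resolve_left h2)
    refine ⟨G, hG, fun z => ?_⟩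
    rw [key z, h z, Finset.prod_insert ha, mul_assoc]

lemma gs_schwarz (F : ℂ → ℂ) (hF : Differentiable ℂ F) (Z : Finset ℂ) (hZ : ∀ z ∈ Z, F z = 0)
    (r : ℝ) (hr : 0 < r) (hZr : ∀ z ∈ Z, ‖z‖ ≤ r) (w : ℂ) (hw : ‖w‖ ≤ r) (C : ℝ)
    (hC : ∀ z, ‖z‖ = 5 * r → ‖F z‖ ≤ C) : ‖F w‖ * 2 ^ Z.card ≤ C := by
  obtain ⟨G, hG, h⟩ := gs_factor Z F hF hZ
  have hbd : ∀ z ∈ frontier (Metric.ball (0:ℂ) (5 * r)), ‖G z‖ ≤ C / (4 * r) ^ Z.card := by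
    intro z hz
    rw [frontier_ball _ (by positivity)] at hz
    have hz' : ‖z‖ = 5 * r := by simpa using hz
    rw [le_div_iff₀ (by positivity)]
    refine le_trans ?_ (hC z hz')
    rw [h z, norm_mul, mul_comm, norm_prod]
    gcongr
    rw [← Finset.prod_const]
    refine Finset.prod_le_prod (fun _ _ => by positivity) (fun a ha => ?_)
    have := norm_sub_norm_le z a
    have := hZr a ha
    linarith
  have hGw : ‖G w‖ ≤ C / (4 * r) ^ Z.card := by
    refine Complex.norm_le_of_forall_mem_frontier_norm_le Metric.isBounded_ball
      hG.diffContOnCl hbd (subset_closure ?_)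
    simp only [Metric.mem_ball, dist_zero_right]
    linarith
  have hp : ‖∏ a ∈ Z, (w - a)‖ ≤ (2 * r) ^ Z.card := by
    rw [norm_prod, ← Finset.prod_const]
    refine Finset.prod_le_prod (fun _ _ => by positivity) (fun a ha => ?_)
    have := norm_sub_le w a
    have := hZr a ha
    linarith
  rw [le_div_iff₀ (by positivity)] at hGw
  rw [h w, norm_mul]
  calc ‖∏ a ∈ Z, (w - a)‖ * ‖G w‖ * 2 ^ Z.card ≤ (2 * r) ^ Z.card * ‖G w‖ * 2 ^ Z.card := by gcongr
    _ = ‖G w‖ * (4 * r) ^ Z.card := by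
      have : (4 * r) = (2 * r) * 2 := by ring
      rw [this, mul_pow (2 * r) 2]; ring
    _ ≤ C := hGw

lemma gs_poly (L : ℕ) (c : Fin L → ℂ) (f : ℕ → ℂ) (hf : Function.Injective f)
    (h : ∀ n, ∑ a, c a * f n ^ (a : ℕ) = 0) : ∀ a, c a = 0 := by
  classical
  set p : Polynomial ℂ := ∑ a : Fin L, Polynomial.C (c a) * Polynomial.X ^ (a : ℕ) with hp
  have hp0 : p = 0 := by
    refine Polynomial.eq_zero_of_infinite_isRoot p ((Set.infinite_range_of_injective hf).mono ?_)
    rintro _ ⟨n, rfl⟩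
    simp only [Set.mem_ofPred_eq, Polynomial.IsRoot.def, hp, Polynomial.eval_finsetSum,
      Polynomial.eval_mul, Polynomial.eval_C, Polynomial.eval_pow, Polynomial.eval_X]
    exact h n
  intro a
  have : p.coeff a = c a := by
    simp only [hp, Polynomial.finsetSum_coeff, Polynomial.coeff_C_mul, Polynomial.coeff_X_pow]
    simp [Fin.val_inj]
  rw [← this, hp0]; simp

/-- nonvanishing -/
lemma gs_nonvanish (L0 L1 : ℕ) (c : Fin L0 × Fin L1 → ℂ) (α γ : ℂ)
    (hγ : Function.Injective (fun n : ℕ => γ ^ n)) 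
    (h : ∀ s t : ℕ, ∑ l : Fin L0 × Fin L1,
      c l * ((s + t * α) ^ (l.1 : ℕ) * γ ^ ((l.2 : ℕ) * t)) = 0) : c = 0 := by
  -- for each t, the polynomial in w vanishes
  have h1 : ∀ (t : ℕ) (w : ℂ), ∑ l : Fin L0 × Fin L1,
      c l * (w ^ (l.1 : ℕ) * γ ^ ((l.2 : ℕ) * t)) = 0 := by
    intro t w
    have := gs_poly L0 (fun a => ∑ b : Fin L1, c (a, b) * γ ^ ((b : ℕ) * t))
      (fun s => (s : ℂ) + t * α) (fun s s' hs => by simpa using hs) (fun s => by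
        rw [← h s t, Fintype.sum_prod_type]
        refine Finset.sum_congr rfl fun a _ => ?_
        rw [Finset.sum_mul]
        refine Finset.sum_congr rfl fun b _ => ?_
        ring)
    rw [Fintype.sum_prod_type]
    refine Finset.sum_eq_zero fun a _ => ?_
    have h2 := this a
    calc _ = (∑ b : Fin L1, c (a, b) * γ ^ ((b : ℕ) * t)) * w ^ (a : ℕ) := by
          rw [Finset.sum_mul]
          refine Finset.sum_congr rfl fun b _ => ?_
          ring
      _ = 0 := by rw [h2, zero_mul]
  have h2 : ∀ (w : ℂ) (b : Fin L1), ∑ a : Fin L0, c (a, b) * w ^ (a : ℕ) = 0 := by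
    intro w
    refine gs_poly L1 (fun b => ∑ a : Fin L0, c (a, b) * w ^ (a : ℕ)) _ hγ (fun t => ?_)
    rw [← h1 t w, Fintype.sum_prod_type_right]
    refine Finset.sum_congr rfl fun b _ => ?_
    rw [Finset.sum_mul]
    refine Finset.sum_congr rfl fun a _ => ?_
    rw [← pow_mul, mul_comm t]; ring
  funext ⟨a, b⟩
  exact gs_poly L0 (fun a => c (a, b)) (fun n => (n : ℂ)) Nat.cast_injective
    (fun n => h2 n b) a

lemma gs_gamma_inj (α : ℂ) (hα : ¬ ∃ q : ℚ, α = (q : ℂ)) :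
    Function.Injective (fun n : ℕ => Complex.exp (2 * (Real.pi : ℂ) * Complex.I * α) ^ n) := by
  intro m n hmn
  simp only [← Complex.exp_nat_mul] at hmn
  rw [Complex.exp_eq_exp_iff_exists_int] at hmn
  obtain ⟨k, hk⟩ := hmn
  by_contra hne
  apply hα
  refine ⟨(k : ℚ) / ((m : ℚ) - n), ?_⟩
  have hne' : (m : ℂ) - n ≠ 0 := sub_ne_zero.2 (by exact_mod_cast hne)
  push_cast
  rw [eq_div_iff hne']
  have h2 : (2 * (Real.pi : ℂ) * Complex.I) ≠ 0 := Complex.two_pi_I_ne_zero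
  apply mul_left_cancel₀ h2
  linear_combination hk

lemma gs_pt_inj (α : ℂ) (hα : ¬ ∃ q : ℚ, α = (q : ℂ)) :
    Function.Injective (fun p : ℕ × ℕ => (p.1 : ℂ) + p.2 * α) := by
  rintro ⟨s, t⟩ ⟨s', t'⟩ h
  simp only at h
  by_cases ht : t = t'
  · subst ht
    simpa using h
  · exfalso
    apply hα
    refine ⟨((s' : ℚ) - s) / ((t : ℚ) - t'), ?_⟩
    have hne' : (t : ℂ) - t' ≠ 0 := sub_ne_zero.2 (by exact_mod_cast ht)
    push_cast
    rw [eq_div_iff hne']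
    linear_combination h

open NumberField in
lemma gs_siegel (K : Type) [Field K] [NumberField K] : ∃ c : ℝ, 1 ≤ c ∧
    ∀ (ι κ : Type) [Fintype ι] [Fintype κ], Fintype.card κ = 2 * Fintype.card ι →
      0 < Fintype.card ι → ∀ a : Matrix ι κ (𝓞 K), a ≠ 0 → ∀ A : ℝ, 0 ≤ A →
      (∀ k l, house (a k l : K) ≤ A) → ∃ ξ : κ → 𝓞 K, ξ ≠ 0 ∧ a.mulVec ξ = 0 ∧
        ∀ l, house (ξ l : K) ≤ c * (c * (Fintype.card κ : ℝ) * A) := by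
  classical
  have main : ∃ c : ℝ, 
    ∀ (ι κ : Type) [Fintype ι] [Fintype κ], Fintype.card κ = 2 * Fintype.card ι →
      0 < Fintype.card ι → ∀ a : Matrix ι κ (𝓞 K), a ≠ 0 → ∀ A : ℝ, 0 ≤ A →
      (∀ k l, house (a k l : K) ≤ A) → ∃ ξ : κ → 𝓞 K, ξ ≠ 0 ∧ a.mulVec ξ = 0 ∧
        ∀ l, house (ξ l : K) ≤ c * (c * (Fintype.card κ : ℝ) * A) := by
    apply Exists.intro
    intro ι κ _ _ hc h0 a ha A hA hh
    obtain ⟨ξ, h1, h2, h3⟩ := NumberField.house.exists_ne_zero_int_vec_house_le K a ha h0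
      (by omega : Fintype.card ι < Fintype.card κ) rfl hh rfl
    refine ⟨ξ, h1, h2, fun l => ?_⟩
    have h4 := h3 l
    have h5 : ((Fintype.card ι : ℝ) / (Fintype.card κ - Fintype.card ι)) = 1 := by
      rw [hc]; push_cast
      have : (Fintype.card ι : ℝ) ≠ 0 := by exact_mod_cast h0.ne'
      field_simp
      ring
    rw [h5, Real.rpow_one] at h4
    exact h4
  obtain ⟨c, hc⟩ := main
  refine ⟨max 1 |c|, le_max_left _ _, fun ι κ _ _ h1 h2 a ha A hA hh => ?_⟩
  obtain ⟨ξ, h3, h4, h5⟩ := hc ι κ h1 h2 a ha A hA hh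
  refine ⟨ξ, h3, h4, fun l => (h5 l).trans ?_⟩
  calc c * (c * (Fintype.card κ : ℝ) * A) = |c| * (|c| * (Fintype.card κ : ℝ) * A) := by
        have := abs_mul_abs_self c
        linear_combination (-(Fintype.card κ : ℝ) * A) * this
    _ ≤ _ := by
        have := le_max_right 1 |c|
        gcongr

lemma gs_mulpow {P X Y : ℝ} {i j k : ℕ} (hP : 1 ≤ P) (hY0 : 0 ≤ Y) (hX : X ≤ P ^ i)
    (hY : Y ≤ P ^ j) (hk : i + j ≤ k) : X * Y ≤ P ^ k := by
  have h0 : 0 ≤ P := by linarith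
  calc X * Y ≤ P ^ i * P ^ j := by gcongr
    _ = P ^ (i + j) := (pow_add _ _ _).symm
    _ ≤ P ^ k := pow_le_pow_right₀ hP hk

lemma gs_powpow {P X : ℝ} {i k : ℕ} (hP : 1 ≤ P) (hX0 : 0 ≤ X) (hX : X ≤ P) (hk : i ≤ k) :
    X ^ i ≤ P ^ k :=
  (pow_le_pow_left₀ hX0 hX i).trans (pow_le_pow_right₀ hP hk)

lemma gs_final (B : ℝ) (hB : 1 ≤ B) (k : ℕ)
    (h : ∀ N : ℕ, 1 ≤ N → ∃ M : ℕ, N ^ 2 ≤ M ∧ (2 : ℝ) ^ (M ^ 2) ≤ (B * M) ^ (k * (N * M))) :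
    False := by
  have h1 : (fun x : ℝ => (k : ℝ) * (Real.log B + Real.log x)) =o[Filter.atTop]
      (fun x : ℝ => x ^ (1 / 2 : ℝ)) := by
    apply Asymptotics.IsLittleO.const_mul_left
    apply Asymptotics.IsLittleO.add
    · rw [Asymptotics.isLittleO_const_left]
      right
      exact tendsto_norm_atTop_atTop.comp (tendsto_rpow_atTop (by norm_num))
    · exact isLittleO_log_rpow_atTop (by norm_num)
  have hl2 : 0 < Real.log 2 := Real.log_pos (by norm_num)
  have h2 := (h1.def (c := Real.log 2 / 2) (by positivity)).and (Filter.eventually_ge_atTop 1)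
  rw [Filter.eventually_atTop] at h2
  obtain ⟨x0, hx0⟩ := h2
  obtain ⟨N, hN⟩ := exists_nat_ge (max x0 1)
  have hN1 : 1 ≤ N := by exact_mod_cast (le_max_right _ _).trans hN
  obtain ⟨M, hM, hle⟩ := h N hN1
  have hNM : N ≤ M := by nlinarith
  have hMx : x0 ≤ M := ((le_max_left _ _).trans hN).trans (by exact_mod_cast hNM)
  obtain ⟨h3, hM1⟩ := hx0 M hMx
  have hM0 : (0 : ℝ) < M := by linarith
  have h4 := Real.log_le_log (by positivity) hle
  rw [Real.log_pow, Real.log_pow, Real.log_mul (by positivity) (by positivity)] at h4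
  rw [Real.norm_eq_abs, Real.norm_eq_abs, abs_of_nonneg (a := (M : ℝ) ^ (1 / 2 : ℝ)) (by positivity),
    ← Real.sqrt_eq_rpow] at h3
  have h5 := (le_abs_self _).trans h3
  have hNs : (N : ℝ) ≤ Real.sqrt M := Real.le_sqrt_of_sq_le (by exact_mod_cast hM)
  push_cast at h4
  have hN0 : (0 : ℝ) ≤ N := by positivity
  have h6 : (N : ℝ) * M * (k * (Real.log B + Real.log M)) ≤
      Real.sqrt M * M * (Real.log 2 / 2 * Real.sqrt M) := by
    have : 0 ≤ Real.log B := Real.log_nonneg hB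
    have : 0 ≤ Real.log M := Real.log_nonneg hM1
    gcongr
  have h7 : Real.sqrt M * M * (Real.log 2 / 2 * Real.sqrt M) = M ^ 2 * Real.log 2 / 2 := by
    have := Real.mul_self_sqrt hM0.le
    linear_combination (M * Real.log 2 / 2) * this
  have : 0 < (M : ℝ) ^ 2 * Real.log 2 := by positivity
  nlinarith

open NumberField in
lemma gs_entry_house (K : Type) [Field K] [NumberField K] (x y : K) (D : ℤ) (B : ℝ)
    (hB1 : 1 ≤ B) (hD : |(D : ℝ)| ≤ B) (hx : 1 + house x ≤ B) (hy : house y ≤ B)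
    (N M s t a b : ℕ) (hM : 1 ≤ M) (hNM : N ^ 2 ≤ M) (hs : s ≤ M) (ht : t ≤ M)
    (ha : a ≤ N ^ 3) (hb : b ≤ 2 * N) :
    house ((D : K) ^ (N ^ 3 + 2 * N * M) * ((s + t * x) ^ a * y ^ (b * t))) ≤
      (B * M) ^ (6 * (N * M)) := by
  have hM' : (1 : ℝ) ≤ M := by exact_mod_cast hM
  have hBP : B ≤ B * M := le_mul_of_one_le_right (by linarith) hM'
  have hP : 1 ≤ B * M := hB1.trans hBP
  have hN3 : N ^ 3 ≤ N * M := by nlinarith [Nat.mul_le_mul_left N hNM]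
  have hbt : b * t ≤ 2 * (N * M) := by
    rw [← mul_assoc]; exact Nat.mul_le_mul hb ht
  have hx0 := house_nonneg x
  refine (house_mul_le _ _).trans ?_
  refine gs_mulpow (i := 3 * (N * M)) (j := 3 * (N * M)) hP (house_nonneg _) ?_ ?_ (by omega)
  · refine (house_pow_le _ _).trans (gs_powpow hP (house_nonneg _) ?_ ?_)
    · rw [house_intCast]; push_cast; linarith
    · nlinarith
  · refine (house_mul_le _ _).trans ?_
    refine gs_mulpow (i := (N * M)) (j := 2 * (N * M)) hP (house_nonneg _) ?_ ?_ (by omega)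
    · refine (house_pow_le _ _).trans (gs_powpow hP (house_nonneg _) ?_ (ha.trans hN3))
      have h1 : house (s : K) = s := by
        have := house_intCast (K := K) (s : ℤ)
        simpa using this
      have hs' : (s : ℝ) ≤ M := by exact_mod_cast hs
      have ht' : (t : ℝ) ≤ M := by exact_mod_cast ht
      calc house ((s : K) + t * x) ≤ house (s : K) + house (t * x) := house_add_le _ _
        _ = s + t * house x := by rw [h1, house_nat_mul]
        _ ≤ M + M * house x := by gcongr
        _ = (1 + house x) * M := by ring
        _ ≤ B * M := by gcongr
    · exact (house_pow_le _ _).trans (gs_powpow hP (house_nonneg _) (hy.trans hBP) hbt)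

lemma gs_entry_int (K : Type) [Field K] (x y : K) (D : ℤ)
    (hx : IsIntegral ℤ ((D : K) * x)) (hy : IsIntegral ℤ ((D : K) * y))
    (E s t a b : ℕ) (hE : a + b * t ≤ E) :
    IsIntegral ℤ ((D : K) ^ E * ((s + t * x) ^ a * y ^ (b * t))) := by
  have hint : ∀ n : ℤ, IsIntegral ℤ (n : K) := fun n => by
    simpa using isIntegral_algebraMap (R := ℤ) (A := K) (x := n)
  obtain ⟨e, rfl⟩ := Nat.exists_eq_add_of_le hE
  have : (D : K) ^ (a + b * t + e) * ((s + t * x) ^ a * y ^ (b * t)) =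
      (D : K) ^ e * (((D : K) * ((s : ℤ) : K) + ((t : ℤ) : K) * ((D : K) * x)) ^ a
        * ((D : K) * y) ^ (b * t)) := by
    push_cast
    have h1 : (D : K) * s + t * (D * x) = D * (s + t * x) := by ring
    rw [h1, mul_pow, mul_pow, pow_add, pow_add]; ring
  rw [this]
  exact ((hint D).pow e).mul (((((hint D).mul (hint s)).add ((hint t).mul hx)).pow a).mul
    (hy.pow _))

open NumberField in
lemma gs_norm (K : Type) [Field K] [NumberField K] (z : K) (hz : IsIntegral ℤ z) (h0 : z ≠ 0)
    (σ : K →+* ℂ) : 1 ≤ ‖σ z‖ * house z ^ (Module.finrank ℚ K - 1) := by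
  refine le_trans ?_ (norm_norm_le_norm_mul_house_pow z σ)
  have h1 : IsIntegral ℤ (Algebra.norm ℚ z) := Algebra.isIntegral_norm ℚ hz
  obtain ⟨n, hn⟩ := IsIntegrallyClosed.isIntegral_iff.1 h1
  have h2 : Algebra.norm ℚ z ≠ 0 := Algebra.norm_ne_zero_iff.2 h0
  rw [← hn] at h2 ⊢
  have h3 : n ≠ 0 := by rintro rfl; simp at h2
  have h4 : (1 : ℤ) ≤ |n| := Int.one_le_abs h3
  have : ‖(algebraMap ℤ ℚ n)‖ = ((|n| : ℤ) : ℝ) := by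
    simp [← Rat.norm_cast_real]
  rw [this]
  exact_mod_cast h4

lemma gs_denom (K : Type) [Field K] [NumberField K] (x y : K) : ∃ D : ℤ, D ≠ 0 ∧
    IsIntegral ℤ ((D : K) * x) ∧ IsIntegral ℤ ((D : K) * y) := by
  have alg : ∀ z : K, ∃ D : ℤ, D ≠ 0 ∧ IsIntegral ℤ ((D : K) * z) := by
    intro z
    have hz : IsAlgebraic ℤ z :=
      (IsFractionRing.isAlgebraic_iff ℤ ℚ K).2 (Algebra.IsAlgebraic.isAlgebraic z)
    obtain ⟨d, hd, h⟩ := hz.exists_integral_multiple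
    exact ⟨d, hd, by simpa using h⟩
  have hint : ∀ n : ℤ, IsIntegral ℤ (n : K) := fun n => by
    simpa using isIntegral_algebraMap (R := ℤ) (A := K) (x := n)
  obtain ⟨d, hd, h⟩ := alg x
  obtain ⟨e, he, h'⟩ := alg y
  refine ⟨d * e, mul_ne_zero hd he, ?_, ?_⟩
  · have := (hint e).mul h
    push_cast; convert! this using 1; ring
  · have := (hint d).mul h'
    push_cast; convert! this using 1; ring

open NumberField in
/-- Siegel's lemma applied to the system of equations. -/
lemma gs_aux (K : Type) [Field K] [NumberField K] (x y : K) (D : ℤ) (hD0 : D ≠ 0)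
    (hDx : IsIntegral ℤ ((D : K) * x)) (hDy : IsIntegral ℤ ((D : K) * y)) (B c : ℝ)
    (hB1 : 1 ≤ B) (hD : |(D : ℝ)| ≤ B) (hx : 1 + house x ≤ B) (hy : house y ≤ B)
    (hc : ∀ (ι κ : Type) [Fintype ι] [Fintype κ], Fintype.card κ = 2 * Fintype.card ι →
      0 < Fintype.card ι → ∀ a : Matrix ι κ (𝓞 K), a ≠ 0 → ∀ A : ℝ, 0 ≤ A →
      (∀ k l, house (a k l : K) ≤ A) → ∃ ξ : κ → 𝓞 K, ξ ≠ 0 ∧ a.mulVec ξ = 0 ∧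
        ∀ l, house (ξ l : K) ≤ c * (c * (Fintype.card κ : ℝ) * A))
    (N : ℕ) (hN : 1 ≤ N) :
    ∃ ξ : Fin (N ^ 3) × Fin (2 * N) → 𝓞 K, ξ ≠ 0 ∧
      (∀ s t : ℕ, s < N ^ 2 → t < N ^ 2 →
        ∑ l, (ξ l : K) * ((s + t * x) ^ (l.1 : ℕ) * y ^ ((l.2 : ℕ) * t)) = 0) ∧
      ∀ l, house (ξ l : K) ≤
        c * (c * (2 * (N : ℝ) ^ 4) * (B * ((N ^ 2 : ℕ) : ℝ)) ^ (6 * (N * N ^ 2))) := by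
  have hN2 : 1 ≤ N ^ 2 := Nat.one_le_pow _ _ hN
  have hN3 : 1 ≤ N ^ 3 := Nat.one_le_pow _ _ hN
  have hDK : (D : K) ≠ 0 := by exact_mod_cast hD0
  let E := N ^ 3 + 2 * N * N ^ 2
  let a : Matrix (Fin (N ^ 2) × Fin (N ^ 2)) (Fin (N ^ 3) × Fin (2 * N)) (𝓞 K) := fun k l =>
    ⟨(D : K) ^ E * (((k.1 : ℕ) + (k.2 : ℕ) * x) ^ (l.1 : ℕ) * y ^ ((l.2 : ℕ) * (k.2 : ℕ))),
      gs_entry_int K x y D hDx hDy E k.1 k.2 l.1 l.2 (by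
        have h1 := l.1.isLt
        have h2 := Nat.mul_le_mul l.2.isLt.le k.2.isLt.le
        simp only [E]; omega)⟩
  have ha : a ≠ 0 := by
    intro h
    have h1 := congrFun (congrFun h (⟨0, hN2⟩, ⟨0, hN2⟩)) (⟨0, hN3⟩, ⟨0, by omega⟩)
    have h2 := congrArg (fun z : 𝓞 K => (z : K)) h1
    simp [a, hDK] at h2
  obtain ⟨ξ, h1, h2, h3⟩ := hc _ _ (by simp; ring) (by simp; omega) a ha
    ((B * ((N ^ 2 : ℕ) : ℝ)) ^ (6 * (N * N ^ 2))) (by positivity) (fun k l =>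
      gs_entry_house K x y D B hB1 hD hx hy N (N ^ 2) k.1 k.2 l.1 l.2 hN2 le_rfl
        k.1.isLt.le k.2.isLt.le l.1.isLt.le l.2.isLt.le)
  refine ⟨ξ, h1, fun s t hs ht => ?_, fun l => (h3 l).trans (le_of_eq ?_)⟩
  · have h4 := congrFun h2 (⟨s, hs⟩, ⟨t, ht⟩)
    have h5 := congrArg (algebraMap (𝓞 K) K) h4
    simp only [Matrix.mulVec, dotProduct, Pi.zero_apply, map_zero, map_sum, map_mul] at h5
    have h6 : (D : K) ^ E * ∑ l, (ξ l : K) * ((s + t * x) ^ (l.1 : ℕ) * y ^ ((l.2 : ℕ) * t)) = 0 := by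
      rw [← h5, Finset.mul_sum]
      refine Finset.sum_congr rfl fun l _ => ?_
      change _ = ((D : K) ^ E * (((s : ℕ) + (t : ℕ) * x) ^ (l.1 : ℕ) * y ^ ((l.2 : ℕ) * (t : ℕ)))) * (ξ l : K)
      ring
    exact (mul_eq_zero.1 h6).resolve_left (pow_ne_zero _ hDK)
  · have : ((Fintype.card (Fin (N ^ 3) × Fin (2 * N)) : ℕ) : ℝ) = 2 * (N : ℝ) ^ 4 := by
      simp; ring
    rw [this]

open NumberField in
lemma gs_step (K : Type) [Field K] [NumberField K] (σ : K →+* ℂ) (x y : K)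
    (hexp : Complex.exp (2 * (Real.pi : ℂ) * Complex.I * σ x) = σ y)
    (hirr : ¬ ∃ q : ℚ, σ x = (q : ℂ)) : ∃ (B : ℝ) (k : ℕ), 1 ≤ B ∧
    ∀ N : ℕ, 1 ≤ N → ∃ M : ℕ, N ^ 2 ≤ M ∧ (2 : ℝ) ^ (M ^ 2) ≤ (B * M) ^ (k * (N * M)) := by
  classical
  obtain ⟨D, hD0, hDx, hDy⟩ := gs_denom K x y
  obtain ⟨c, hc1, hc⟩ := gs_siegel K
  obtain ⟨B, hB⟩ : ∃ B : ℝ, ∀ z ∈ ({2, c, |(D : ℝ)|, 1 + house x, house y, 5 * (1 + ‖σ x‖),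
      Real.exp (10 * Real.pi * (1 + ‖σ x‖))} : Finset ℝ), z ≤ B := by
    obtain ⟨B, hB⟩ := Finset.bddAbove ({2, c, |(D : ℝ)|, 1 + house x, house y, 5 * (1 + ‖σ x‖),
      Real.exp (10 * Real.pi * (1 + ‖σ x‖))} : Finset ℝ)
    exact ⟨B, fun z hz => hB (by exact_mod_cast hz)⟩
  have hB2 : 2 ≤ B := hB _ (by simp)
  have hBc : c ≤ B := hB _ (by simp)
  have hBD : |(D : ℝ)| ≤ B := hB _ (by simp)
  have hBx : 1 + house x ≤ B := hB _ (by simp)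
  have hBy : house y ≤ B := hB _ (by simp)
  have hBr : 5 * (1 + ‖σ x‖) ≤ B := hB _ (by simp)
  have hBe : Real.exp (10 * Real.pi * (1 + ‖σ x‖)) ≤ B := hB _ (by simp)
  have hB1 : 1 ≤ B := by linarith
  refine ⟨B, 18 + 18 * (Module.finrank ℚ K - 1), hB1, fun N hN => ?_⟩
  obtain ⟨ξ, hξ0, hξ, hξh⟩ := gs_aux K x y D hD0 hDx hDy B c hB1 hBD hBx hBy hc N hN
  have hDK : (D : K) ≠ 0 := by exact_mod_cast hD0
  let val : ℕ → ℕ → K := fun s t =>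
    ∑ l, (ξ l : K) * ((s + t * x) ^ (l.1 : ℕ) * y ^ ((l.2 : ℕ) * t))
  have hσval : ∀ s t, σ (val s t) = ∑ l, σ (ξ l : K) *
      (((s : ℂ) + t * σ x) ^ (l.1 : ℕ) * σ y ^ ((l.2 : ℕ) * t)) := by
    intro s t; simp [val]
  have hex : ∃ M : ℕ, ∃ s t : ℕ, s ≤ M ∧ t ≤ M ∧ val s t ≠ 0 := by
    by_contra hcon
    push Not at hcon
    have hv : ∀ s t, val s t = 0 := fun s t => hcon (max s t) s t (le_max_left _ _) (le_max_right _ _)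
    have := gs_nonvanish (N ^ 3) (2 * N) (fun l => σ (ξ l : K)) (σ x) (σ y)
      (by rw [← hexp]; exact gs_gamma_inj _ hirr) (fun s t => by rw [← hσval, hv, map_zero])
    apply hξ0
    funext l
    have h1 := congrFun this l
    simpa using h1
  obtain ⟨M, hMM⟩ : ∃ M, M = Nat.find hex := ⟨_, rfl⟩
  obtain ⟨s, t, hs, ht, hst⟩ := Nat.find_spec hex
  rw [← hMM] at hs ht
  have hmin : ∀ s t, s < M → t < M → val s t = 0 := by
    intro s t hs ht
    by_contra hne
    exact Nat.find_min hex (m := M - 1) (by omega) ⟨s, t, by omega, by omega, hne⟩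
  have hNM : N ^ 2 ≤ M := by
    by_contra hlt
    exact hst (hξ s t (by omega) (by omega))
  refine ⟨M, hNM, ?_⟩
  have hM1 : 1 ≤ M := (Nat.one_le_pow _ _ hN).trans hNM
  have hM' : (1 : ℝ) ≤ M := by exact_mod_cast hM1
  have hBP : B ≤ B * M := le_mul_of_one_le_right (by linarith) hM'
  set P : ℝ := B * M with hPdef
  have hP : 1 ≤ P := hB1.trans hBP
  have hP0 : 0 ≤ P := by linarith
  set T : ℕ := N * M with hT
  have hT1 : 1 ≤ T := Nat.mul_pos hN hM1
  have hN3 : N ^ 3 ≤ T := by rw [hT]; nlinarith [Nat.mul_le_mul_left N hNM]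
  have hNM' : (N : ℝ) ^ 2 ≤ M := by exact_mod_cast hNM
  have hcard : (2 * (N : ℝ) ^ 4) ≤ P ^ 2 := by
    have : ((N : ℝ) ^ 2) ^ 2 ≤ (M : ℝ) ^ 2 := by gcongr
    rw [hPdef, mul_pow]
    have h4 : (4 : ℝ) ≤ B ^ 2 := by nlinarith
    calc 2 * (N : ℝ) ^ 4 = 2 * (((N : ℝ) ^ 2) ^ 2) := by ring
      _ ≤ 4 * (M : ℝ) ^ 2 := by nlinarith
      _ ≤ _ := by gcongr
  have hH : ∀ l, house (ξ l : K) ≤ P ^ (10 * T) := by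
    intro l
    refine (hξh l).trans ?_
    have hcP : c ≤ P ^ 1 := by rw [pow_one]; exact hBc.trans hBP
    refine gs_mulpow (i := 1) (j := 3 + 6 * T) hP (by positivity) hcP ?_ (by omega)
    refine gs_mulpow (i := 3) (j := 6 * T) hP (by positivity) ?_ ?_ (by omega)
    · exact gs_mulpow (i := 1) (j := 2) hP (by positivity) hcP hcard (by omega)
    · refine gs_powpow hP (by positivity) ?_ ?_
      · rw [hPdef]; gcongr
      · rw [hT]; exact Nat.mul_le_mul_left _ (Nat.mul_le_mul_left _ hNM)
  have hsumbd : ∀ (f : Fin (N ^ 3) × Fin (2 * N) → ℝ) (e : ℕ), (∀ l, f l ≤ P ^ e) →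
      ∑ l, f l ≤ P ^ (2 + e) := by
    intro f e hf
    calc ∑ l, f l ≤ ∑ l : Fin (N ^ 3) × Fin (2 * N), P ^ e := Finset.sum_le_sum fun l _ => hf l
      _ = (2 * (N : ℝ) ^ 4) * P ^ e := by
          rw [Finset.sum_const, nsmul_eq_mul]
          congr 1
          simp
          ring
      _ ≤ P ^ (2 + e) := gs_mulpow hP (by positivity) hcard le_rfl le_rfl
  -- the algebraic integer
  set E : ℕ := N ^ 3 + 2 * N * M with hE
  have hET : E ≤ 3 * T := by rw [hE]; nlinarith
  set ζ : K := (D : K) ^ E * val s t with hζ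
  have hζ0 : ζ ≠ 0 := mul_ne_zero (pow_ne_zero _ hDK) hst
  have hζs : ζ = ∑ l, (ξ l : K) * ((D : K) ^ E *
      ((s + t * x) ^ (l.1 : ℕ) * y ^ ((l.2 : ℕ) * t))) := by
    rw [hζ, Finset.mul_sum]
    exact Finset.sum_congr rfl fun l _ => by ring
  have hζi : IsIntegral ℤ ζ := by
    rw [hζs]
    refine IsIntegral.sum _ fun l _ => (RingOfIntegers.isIntegral_coe (ξ l)).mul ?_
    refine gs_entry_int K x y D hDx hDy E s t l.1 l.2 ?_
    have h1 := l.1.isLt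
    have h2 := Nat.mul_le_mul l.2.isLt.le ht
    omega
  have hζh : house ζ ≤ P ^ (18 * T) := by
    rw [hζs]
    refine (house_sum_le_sum_house _ _).trans ((hsumbd _ (16 * T) fun l => ?_).trans
      (pow_le_pow_right₀ hP (by omega)))
    refine (house_mul_le _ _).trans ?_
    refine gs_mulpow (i := 10 * T) (j := 6 * T) hP (house_nonneg _) (hH l) ?_ (by omega)
    exact gs_entry_house K x y D B hB1 hBD hBx hBy N M s t l.1 l.2 hM1 hNM hs ht
      l.1.isLt.le l.2.isLt.le
  have hnorm := gs_norm K ζ hζi hζ0 σ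
  -- the analytic function
  let F : ℂ → ℂ := fun z => ∑ l : Fin (N ^ 3) × Fin (2 * N), σ (ξ l : K) *
    (z ^ (l.1 : ℕ) * Complex.exp (((l.2 : ℕ) : ℂ) * (2 * (Real.pi : ℂ) * Complex.I * z)))
  have hFd : Differentiable ℂ F := by
    simp only [F]; fun_prop
  have hFval : ∀ s t : ℕ, F ((s : ℂ) + t * σ x) = σ (val s t) := by
    intro s t
    rw [hσval]
    refine Finset.sum_congr rfl fun l _ => ?_
    have h1 : Complex.exp (2 * (Real.pi : ℂ) * Complex.I * ((s : ℂ) + t * σ x)) = σ y ^ t := by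
      rw [← hexp, ← Complex.exp_nat_mul, mul_add, Complex.exp_add]
      have h2 : Complex.exp (2 * (Real.pi : ℂ) * Complex.I * s) = 1 := by
        rw [mul_comm]; exact Complex.exp_nat_mul_two_pi_mul_I s
      rw [h2, one_mul]; congr 1; ring
    rw [Complex.exp_nat_mul, h1, ← pow_mul, mul_comm t]
  set r : ℝ := M * (1 + ‖σ x‖) with hr
  have hr0 : 0 < r := by positivity
  have hpt : ∀ s t : ℕ, s ≤ M → t ≤ M → ‖(s : ℂ) + t * σ x‖ ≤ r := by
    intro s t hs ht
    have hs' : (s : ℝ) ≤ M := by exact_mod_cast hs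
    have ht' : (t : ℝ) ≤ M := by exact_mod_cast ht
    calc ‖(s : ℂ) + t * σ x‖ ≤ ‖(s : ℂ)‖ + ‖(t : ℂ) * σ x‖ := norm_add_le _ _
      _ = s + t * ‖σ x‖ := by simp
      _ ≤ M + M * ‖σ x‖ := by gcongr
      _ = r := by rw [hr]; ring
  have hFbd : ∀ z : ℂ, ‖z‖ = 5 * r → ‖F z‖ ≤ P ^ (15 * T) := by
    intro z hz
    have hzP : ‖z‖ ≤ P := by
      rw [hz, hr, hPdef]
      calc 5 * (M * (1 + ‖σ x‖)) = (5 * (1 + ‖σ x‖)) * M := by ring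
        _ ≤ B * M := by gcongr
    refine (norm_sum_le _ _).trans ((hsumbd _ (13 * T) fun l => ?_).trans
      (pow_le_pow_right₀ hP (by omega)))
    rw [norm_mul, norm_mul, norm_pow]
    refine gs_mulpow (i := 10 * T) (j := 3 * T) hP (by positivity)
      ((norm_embedding_le_house _ σ).trans (hH l)) ?_ (by omega)
    refine gs_mulpow (i := T) (j := 2 * T) hP (by positivity)
      (gs_powpow hP (by positivity) hzP (l.1.isLt.le.trans hN3)) ?_ (by omega)
    have h1 : ‖Complex.exp (2 * (Real.pi : ℂ) * Complex.I * z)‖ ≤ B ^ M := by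
      rw [Complex.norm_exp]
      calc Real.exp (2 * (Real.pi : ℂ) * Complex.I * z).re
          ≤ Real.exp ‖2 * (Real.pi : ℂ) * Complex.I * z‖ := Real.exp_le_exp.2 (Complex.re_le_norm _)
        _ = Real.exp (10 * Real.pi * (1 + ‖σ x‖)) ^ M := by
          rw [← Real.exp_nat_mul]
          congr 1
          rw [norm_mul, hz, hr]
          simp [abs_of_pos Real.pi_pos]
          ring
        _ ≤ B ^ M := by gcongr
    rw [Complex.exp_nat_mul, norm_pow]
    calc _ ≤ (B ^ M) ^ (l.2 : ℕ) := by gcongr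
      _ = B ^ (M * (l.2 : ℕ)) := (pow_mul _ _ _).symm
      _ ≤ P ^ (2 * T) := gs_powpow hP (by positivity) hBP (by
          have := Nat.mul_le_mul_left M l.2.isLt.le
          rw [hT]; nlinarith)
  let Z : Finset ℂ := (Finset.range M ×ˢ Finset.range M).image
    (fun p : ℕ × ℕ => (p.1 : ℂ) + p.2 * σ x)
  have hZc : Z.card = M ^ 2 := by
    rw [Finset.card_image_of_injective _ (gs_pt_inj _ hirr)]
    simp [sq]
  have hsch := gs_schwarz F hFd Z (by
      intro z hz
      obtain ⟨p, hp, rfl⟩ := Finset.mem_image.1 hz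
      simp only [Finset.mem_product, Finset.mem_range] at hp
      rw [hFval, hmin _ _ hp.1 hp.2, map_zero]) r hr0 (by
      intro z hz
      obtain ⟨p, hp, rfl⟩ := Finset.mem_image.1 hz
      simp only [Finset.mem_product, Finset.mem_range] at hp
      exact hpt _ _ hp.1.le hp.2.le) _ (hpt s t hs ht) _ hFbd
  rw [hZc, hFval] at hsch
  have hσζ : ‖σ ζ‖ = |(D : ℝ)| ^ E * ‖σ (val s t)‖ := by
    rw [hζ, map_mul, map_pow, map_intCast, norm_mul, norm_pow, Complex.norm_intCast]
  rw [hσζ] at hnorm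
  have hDE : |(D : ℝ)| ^ E ≤ P ^ (3 * T) := gs_powpow hP (by positivity) (hBD.trans hBP) hET
  have hhd : house ζ ^ (Module.finrank ℚ K - 1) ≤ P ^ (18 * T * (Module.finrank ℚ K - 1)) := by
    rw [pow_mul]; exact pow_le_pow_left₀ (house_nonneg _) hζh _
  have hh0 := house_nonneg ζ
  set d := Module.finrank ℚ K - 1
  calc (2 : ℝ) ^ (M ^ 2) = 1 * 2 ^ (M ^ 2) := by ring
    _ ≤ (|(D : ℝ)| ^ E * ‖σ (val s t)‖ * house ζ ^ d) * 2 ^ (M ^ 2) := by gcongr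
    _ = (|(D : ℝ)| ^ E * house ζ ^ d) * (‖σ (val s t)‖ * 2 ^ (M ^ 2)) := by ring
    _ ≤ P ^ ((18 + 18 * d) * T) := by
      refine gs_mulpow (i := 3 * T + 18 * T * d) (j := 15 * T) hP (by positivity) ?_ hsch
        (le_of_eq (by ring))
      exact gs_mulpow hP (by positivity) hDE hhd le_rfl

/-- Gelfond–Schneider consequence: if `α` and `e^{2π√-1 α}` are both algebraic
over `ℚ`, then `α` is rational. -/
theorem rational_of_algebraic_and_exp_algebraic (α : ℂ)
    (h1 : IsAlgebraic ℚ α)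
    (h2 : IsAlgebraic ℚ (Complex.exp (2 * (Real.pi : ℂ) * Complex.I * α))) :
    ∃ q : ℚ, α = (q : ℂ) := by
  by_contra hirr
  set γ := Complex.exp (2 * (Real.pi : ℂ) * Complex.I * α) with hγ
  let K := IntermediateField.adjoin ℚ ({α, γ} : Set ℂ)
  have : FiniteDimensional ℚ K := IntermediateField.finiteDimensional_adjoin (by
    rintro z (rfl | rfl)
    · exact h1.isIntegral
    · exact h2.isIntegral)
  have : NumberField K := { to_charZero := inferInstance, to_finiteDimensional := inferInstance }
  have hα : α ∈ K := IntermediateField.subset_adjoin _ _ (by simp)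
  have hγK : γ ∈ K := IntermediateField.subset_adjoin _ _ (by simp)
  obtain ⟨B, k, hB, h⟩ := gs_step K (algebraMap K ℂ) ⟨α, hα⟩ ⟨γ, hγK⟩ hγ.symm hirr
  exact gs_final B hB k h
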